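/- Suppose c is odd. Then G acts freely on X ∖ {0}: if g ∈ G and p ∈ X with p ≠ (0,0,0,0) and g·p = p, then g is the identity matrix. -/

import Mathlib

/-- The complete intersection cusp `X ⊆ ℂ⁴`: points `(x,y,u,v)` with
`x² + y² = u^α v^β` and `u² + v² = x^γ y^δ`. -/
def cuspX (α β γ δ : ℕ) : Set (Fin 4 → ℂ) :=
  {p | p 0 ^ 2 + p 1 ^ 2 = p 2 ^ α * p 3 ^ β ∧ p 2 ^ 2 + p 3 ^ 2 = p 0 ^ γ * p 1 ^ δ}

/-!
Put `t = diag(t₀, t₁, t₂, t₃)`. Since `ω ^ (2 * b) = -1`, each of the four generators satisfies the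
monomial equations `t₀ ^ (2 * b) = (t₀ / t₁) ^ a * (t₂ / t₃)` and
`t₂ ^ (2 * b) = (t₀ / t₁) * (t₂ / t₃) ^ d`, and hence so does every element of `G`. If three
coordinates of such a `t` are `1`, then one of the equations forces the fourth to be `1` as well.
On the other hand, a nonzero point of `X` has at most one vanishing coordinate, so whatever fixes
it has at least three diagonal entries equal to `1`.
-/

/-- The subgroup of the torus `M⁴` cut out by the equations
`t₀ ^ (2 * b) = (t₀ / t₁) ^ a * (t₂ / t₃)` and `t₂ ^ (2 * b) = (t₀ / t₁) * (t₂ / t₃) ^ d`. It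
contains the group `G` of the cusp, and serves to recognize the identity element of `G` from three
of its four coordinates. -/
def cuspSubgroup (a b d : ℕ) (M : Type*) [CommGroup M] : Subgroup (Fin 4 → M) :=
  let t (i : Fin 4) : (Fin 4 → M) →* M := Pi.evalMonoidHom (fun _ => M) i
  (t 0 ^ (2 * b)).eqLocus ((t 0 / t 1) ^ a * (t 2 / t 3)) ⊓
    (t 2 ^ (2 * b)).eqLocus ((t 0 / t 1) * (t 2 / t 3) ^ d)

section CuspSubgroup

variable {M : Type*} [CommGroup M]

lemma mem_cuspSubgroup_iff {a b d : ℕ} {t : Fin 4 → M} :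
    t ∈ cuspSubgroup a b d M ↔
      t 0 ^ (2 * b) = (t 0 / t 1) ^ a * (t 2 / t 3) ∧
        t 2 ^ (2 * b) = (t 0 / t 1) * (t 2 / t 3) ^ d :=
  Iff.rfl

lemma eq_one_of_mem_cuspSubgroup {a b d : ℕ} {t : Fin 4 → M} (ht : t ∈ cuspSubgroup a b d M)
    (j : Fin 4) (hj : ∀ i ≠ j, t i = 1) : t = 1 := by
  obtain ⟨hxy, huv⟩ := mem_cuspSubgroup_iff.mp ht
  suffices hone : t j = 1 by
    ext i
    obtain rfl | hij := eq_or_ne i j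
    exacts [hone, hj i hij]
  fin_cases j
  · simpa [hj 1, hj 2, hj 3] using huv.symm
  · simpa [hj 0, hj 2, hj 3] using huv
  · simpa [hj 0, hj 1, hj 3] using hxy.symm
  · simpa [hj 0, hj 1, hj 2] using hxy

lemma cusp_generators_mem_cuspSubgroup [HasDistribNeg M] (a d : ℕ) {b : ℕ} {ω : M}
    (hω : ω ^ (2 * b) = -1) :
    ![-ω ^ a, ω ^ a, ω, ω] ∈ cuspSubgroup a b d M ∧
      ![ω ^ a, -ω ^ a, ω, ω] ∈ cuspSubgroup a b d M ∧
      ![ω, ω, -ω ^ d, ω ^ d] ∈ cuspSubgroup a b d M ∧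
      ![ω, ω, ω ^ d, -ω ^ d] ∈ cuspSubgroup a b d M := by
  have hpow (n : ℕ) : (ω ^ n) ^ (2 * b) = (-1) ^ n := by rw [pow_right_comm, hω]
  have hneg (n : ℕ) : (-ω ^ n) ^ (2 * b) = (-1) ^ n := by rw [(even_two_mul b).neg_pow, hpow]
  simp [mem_cuspSubgroup_iff, hω, hpow, hneg, neg_div, div_neg]

end CuspSubgroup

/-- The embedding of the torus `(Rˣ)ⁿ` into the invertible matrices as the invertible diagonal
ones. -/
def diagonalUnits (n R : Type*) [Fintype n] [DecidableEq n] [Semiring R] :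
    (n → Rˣ) →* (Matrix n n R)ˣ :=
  (Units.map (Matrix.diagonalRingHom n R : (n → R) →* Matrix n n R)).comp
    (MulEquiv.piUnits (M := fun _ : n => R)).symm.toMonoidHom

lemma coe_diagonalUnits {n R : Type*} [Fintype n] [DecidableEq n] [Semiring R] (t : n → Rˣ) :
    (diagonalUnits n R t : Matrix n n R) = Matrix.diagonal fun i => (t i : R) :=
  rfl

lemma closure_cusp_generators_le {R : Type*} [CommRing R] {a b d : ℕ} {ω : Rˣ}
    (hω : ω ^ (2 * b) = -1)
    {S₁ S₂ S₃ S₄ : (Matrix (Fin 4) (Fin 4) R)ˣ}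
    (hS₁ : (S₁ : Matrix (Fin 4) (Fin 4) R) = Matrix.diagonal ![-(ω : R) ^ a, ω ^ a, ω, ω])
    (hS₂ : (S₂ : Matrix (Fin 4) (Fin 4) R) = Matrix.diagonal ![(ω : R) ^ a, -ω ^ a, ω, ω])
    (hS₃ : (S₃ : Matrix (Fin 4) (Fin 4) R) = Matrix.diagonal ![(ω : R), ω, -ω ^ d, ω ^ d])
    (hS₄ : (S₄ : Matrix (Fin 4) (Fin 4) R) = Matrix.diagonal ![(ω : R), ω, ω ^ d, -ω ^ d]) :
    Subgroup.closure {S₁, S₂, S₃, S₄} ≤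
      (cuspSubgroup a b d Rˣ).map (diagonalUnits (Fin 4) R) := by
  have mem_map {S : (Matrix (Fin 4) (Fin 4) R)ˣ} {t : Fin 4 → Rˣ} (ht : t ∈ cuspSubgroup a b d Rˣ)
      (hS : (S : Matrix (Fin 4) (Fin 4) R) = Matrix.diagonal ![↑(t 0), ↑(t 1), ↑(t 2), ↑(t 3)]) :
      S ∈ (cuspSubgroup a b d Rˣ).map (diagonalUnits (Fin 4) R) := by
    refine ⟨t, ht, Units.ext ((coe_diagonalUnits t).trans (.trans ?_ hS.symm))⟩
    congr! with i
    fin_cases i <;> rfl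
  obtain ⟨h₁, h₂, h₃, h₄⟩ := cusp_generators_mem_cuspSubgroup a d hω
  rw [Subgroup.closure_le]
  rintro S (rfl | rfl | rfl | rfl)
  exacts [mem_map h₁ hS₁, mem_map h₂ hS₂, mem_map h₃ hS₃, mem_map h₄ hS₄]

section Points

variable {R : Type*} [Semiring R] [NoZeroDivisors R]

lemma eq_zero_iff_of_sq_add_sq_eq {α β : ℕ} (hα : α ≠ 0) (hβ : β ≠ 0) {x y u v : R}
    (h : x ^ 2 + y ^ 2 = u ^ α * v ^ β) (hx : x = 0) : y = 0 ↔ u = 0 ∨ v = 0 := by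
  have hy : y ^ 2 = u ^ α * v ^ β := by simpa [hx] using h
  rw [← pow_eq_zero_iff (n := 2) two_ne_zero, hy, mul_eq_zero, pow_eq_zero_iff hα,
    pow_eq_zero_iff hβ]

lemma exists_forall_ne_zero_of_cusp_equations {α β γ δ : ℕ} (hα : α ≠ 0) (hβ : β ≠ 0)
    (hγ : γ ≠ 0) (hδ : δ ≠ 0) {p : Fin 4 → R} (hp : p ≠ 0)
    (hxy : p 0 ^ 2 + p 1 ^ 2 = p 2 ^ α * p 3 ^ β)
    (huv : p 2 ^ 2 + p 3 ^ 2 = p 0 ^ γ * p 1 ^ δ) :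
    ∃ j, ∀ i ≠ j, p i ≠ 0 := by
  have hx := eq_zero_iff_of_sq_add_sq_eq hα hβ hxy
  have hy := eq_zero_iff_of_sq_add_sq_eq hα hβ ((add_comm _ _).trans hxy)
  have hu := eq_zero_iff_of_sq_add_sq_eq hγ hδ huv
  have hv := eq_zero_iff_of_sq_add_sq_eq hγ hδ ((add_comm _ _).trans huv)
  have hne : ¬(p 0 = 0 ∧ p 1 = 0 ∧ p 2 = 0 ∧ p 3 = 0) := fun h =>
    hp (funext (by simpa [Fin.forall_fin_succ] using h))
  by_contra! htwo
  simp only [Fin.forall_fin_succ, Fin.exists_fin_succ] at htwo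
  grind

end Points

theorem stmt_19_general {R : Type*} [CommRing R] [IsDomain R] {a b d : ℕ} (hb : b ≠ 0)
    {ω : R} (hω : ω ^ (2 * b) = -1) {S₁ S₂ S₃ S₄ : (Matrix (Fin 4) (Fin 4) R)ˣ}
    (hS₁ : (S₁ : Matrix (Fin 4) (Fin 4) R) = Matrix.diagonal ![-ω ^ a, ω ^ a, ω, ω])
    (hS₂ : (S₂ : Matrix (Fin 4) (Fin 4) R) = Matrix.diagonal ![ω ^ a, -ω ^ a, ω, ω])
    (hS₃ : (S₃ : Matrix (Fin 4) (Fin 4) R) = Matrix.diagonal ![ω, ω, -ω ^ d, ω ^ d])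
    (hS₄ : (S₄ : Matrix (Fin 4) (Fin 4) R) = Matrix.diagonal ![ω, ω, ω ^ d, -ω ^ d])
    {α β γ δ : ℕ} (hα : α ≠ 0) (hβ : β ≠ 0) (hγ : γ ≠ 0) (hδ : δ ≠ 0)
    {g : (Matrix (Fin 4) (Fin 4) R)ˣ} (hg : g ∈ Subgroup.closure {S₁, S₂, S₃, S₄})
    {p : Fin 4 → R} (hxy : p 0 ^ 2 + p 1 ^ 2 = p 2 ^ α * p 3 ^ β)
    (huv : p 2 ^ 2 + p 3 ^ 2 = p 0 ^ γ * p 1 ^ δ) (hp : p ≠ 0)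
    (hgp : (fun i => (g : Matrix (Fin 4) (Fin 4) R) i i * p i) = p) : g = 1 := by
  have hunit : IsUnit ω :=
    (isUnit_pow_iff (mul_ne_zero two_ne_zero hb)).mp (hω ▸ isUnit_one.neg)
  lift ω to Rˣ using hunit
  obtain ⟨t, ht, rfl⟩ :=
    closure_cusp_generators_le (Units.ext (by simpa using hω)) hS₁ hS₂ hS₃ hS₄ hg
  obtain ⟨j, hj⟩ := exists_forall_ne_zero_of_cusp_equations hα hβ hγ hδ hp hxy huv
  have hfix : ∀ i ≠ j, t i = 1 := fun i hij => by
    have hi := congrFun hgp i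
    rwa [coe_diagonalUnits, Matrix.diagonal_apply_eq, mul_eq_right₀ (hj i hij), Units.val_eq_one]
      at hi
  rw [eq_one_of_mem_cuspSubgroup ht j hfix, map_one]

theorem stmt_19 (a b c d : ℕ) (ha : 0 < a) (hb : 0 < b) (hc : 0 < c) (hd : 0 < d)
    (hdet : a * d = b * c + 1) (hcodd : Odd c)
    (ω : ℂ) (hω : IsPrimitiveRoot ω (4 * b))
    (S₁ S₂ S₃ S₄ : (Matrix (Fin 4) (Fin 4) ℂ)ˣ)
    (hS₁ : (S₁ : Matrix (Fin 4) (Fin 4) ℂ) = Matrix.diagonal ![-ω ^ a, ω ^ a, ω, ω])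
    (hS₂ : (S₂ : Matrix (Fin 4) (Fin 4) ℂ) = Matrix.diagonal ![ω ^ a, -ω ^ a, ω, ω])
    (hS₃ : (S₃ : Matrix (Fin 4) (Fin 4) ℂ) = Matrix.diagonal ![ω, ω, -ω ^ d, ω ^ d])
    (hS₄ : (S₄ : Matrix (Fin 4) (Fin 4) ℂ) = Matrix.diagonal ![ω, ω, ω ^ d, -ω ^ d])
    (α β γ δ : ℕ) (hαβ : α + β = 2 * a) (hγδ : γ + δ = 2 * d)
    (hpar : α % 2 = c % 2 ∧ β % 2 = c % 2 ∧ γ % 2 = c % 2 ∧ δ % 2 = c % 2) :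
    ∀ g ∈ Subgroup.closure {S₁, S₂, S₃, S₄}, ∀ p ∈ cuspX α β γ δ, p ≠ 0 →
      (fun i => (g : Matrix (Fin 4) (Fin 4) ℂ) i i * p i) = p → g = 1 := by
  intro g hg p ⟨hxy, huv⟩ hp hgp
  have hω' : ω ^ (2 * b) = -1 := (hω.pow (by positivity) (by ring)).eq_neg_one_of_two_right
  rw [Nat.odd_iff] at hcodd
  exact stmt_19_general hb.ne' hω' hS₁ hS₂ hS₃ hS₄ (by lia) (by lia) (by lia) (by lia) hg hxy huv
    hp hgp
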